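/- Suppose γ > 0 and β < 0. Then for every integer Δn ≥ 2 there exist a Floquet exponent ξ ∈ (0, 1/2] and k > 0 such that ω(−Δn+ξ) = ω(ξ), i.e., the modes −Δn and 0 collide, where c₀ = γ/k² + βk² and ω(x) = k²·x·(c₀ − βk²x²) − γ/x. -/

import Mathlib

/-- Dispersion function of the linearized Ostrovsky equation,
with `c₀ = γ/k² + βk²` built in. -/
noncomputable def omega (γ β k x : ℝ) : ℝ :=
  k^2 * x * ((γ/k^2 + β*k^2) - β*k^2*x^2) - γ/x

/-!
Since `ω` depends on `k` only through `k ^ 4`, and linearly so, two distinct modes `x` and `y`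
collide exactly when `k ^ 4` solves a linear equation; a suitable `k > 0` exists as soon as the
solution of that equation is positive. For `x = -Δ + ξ` and `y = ξ`, put `p = ξ * (Δ - ξ)`. Then
the equation is `γ * (1 - p) = k ^ 4 * (-β * p * (Δ ^ 2 - 1 - 3 * p))`, and when `γ` and `β` have
opposite signs and `Δ > 1` it has a positive solution for every small `p > 0`, hence for every
small `ξ > 0`.
-/

lemma omega_sub_omega (γ β : ℝ) {k x y : ℝ} (hk : k ≠ 0) (hx : x ≠ 0) (hy : y ≠ 0) :
    omega γ β k x - omega γ β k y =
      (x - y) / (x * y) *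
        (γ * (1 + x * y) - k ^ 4 * (β * (x * y) * (x ^ 2 + x * y + y ^ 2 - 1))) := by
  unfold omega
  field_simp
  ring

lemma omega_eq_omega_iff (γ β : ℝ) {k x y : ℝ} (hk : k ≠ 0) (hx : x ≠ 0) (hy : y ≠ 0)
    (hxy : x ≠ y) :
    omega γ β k x = omega γ β k y ↔
      γ * (1 + x * y) = k ^ 4 * (β * (x * y) * (x ^ 2 + x * y + y ^ 2 - 1)) := by
  have hfactor : (x - y) / (x * y) ≠ 0 := div_ne_zero (sub_ne_zero.mpr hxy) (mul_ne_zero hx hy)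
  rw [← sub_eq_zero, omega_sub_omega γ β hk hx hy, mul_eq_zero_iff_left hfactor, sub_eq_zero]

lemma exists_pos_omega_eq_omega {γ β x y : ℝ} (hxy : x ≠ y)
    (hK : 0 < γ * (1 + x * y) / (β * (x * y) * (x ^ 2 + x * y + y ^ 2 - 1))) :
    ∃ k : ℝ, 0 < k ∧ omega γ β k x = omega γ β k y := by
  set K := γ * (1 + x * y) / (β * (x * y) * (x ^ 2 + x * y + y ^ 2 - 1)) with hK_def
  have hden : β * (x * y) * (x ^ 2 + x * y + y ^ 2 - 1) ≠ 0 := (div_ne_zero_iff.mp hK.ne').2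
  have hx : x ≠ 0 := by rintro rfl; simp at hden
  have hy : y ≠ 0 := by rintro rfl; simp at hden
  have hk : 0 < K ^ ((4 : ℕ) : ℝ)⁻¹ := Real.rpow_pos_of_pos hK _
  refine ⟨K ^ ((4 : ℕ) : ℝ)⁻¹, hk, (omega_eq_omega_iff γ β hk.ne' hx hy hxy).mpr ?_⟩
  rw [Real.rpow_inv_natCast_pow hK.le four_ne_zero, hK_def, div_mul_cancel₀ _ hden]

lemma exists_pos_omega_neg_add_eq_omega {γ β Δ ξ : ℝ} (hγβ : γ * β < 0)
    (hpos : 0 < ξ * (Δ - ξ)) (hlt_one : ξ * (Δ - ξ) < 1)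
    (hlt : 3 * (ξ * (Δ - ξ)) < Δ ^ 2 - 1) :
    ∃ k : ℝ, 0 < k ∧ omega γ β k (-Δ + ξ) = omega γ β k ξ := by
  have hΔ : Δ ≠ 0 := by rintro rfl; nlinarith only [hpos, sq_nonneg ξ]
  refine exists_pos_omega_eq_omega (by simpa using hΔ) ?_
  have hprod : (-Δ + ξ) * ξ = -(ξ * (Δ - ξ)) := by ring
  have hquad : (-Δ + ξ) ^ 2 + (-Δ + ξ) * ξ + ξ ^ 2 - 1 = Δ ^ 2 - 1 - 3 * (ξ * (Δ - ξ)) := by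
    ring
  have hratio : γ / β < 0 := by rwa [div_neg_iff, ← mul_neg_iff]
  rw [hquad, hprod, mul_assoc β, mul_div_mul_comm]
  exact mul_pos_of_neg_of_neg hratio (div_neg_of_pos_of_neg (by linarith)
    (mul_neg_of_neg_of_pos (neg_neg_of_pos hpos) (sub_pos.mpr hlt)))

lemma exists_pos_le_half_mul_sub_lt {Δ : ℝ} (hΔ : 1 < Δ) :
    ∃ ξ : ℝ, 0 < ξ ∧ ξ ≤ 1 / 2 ∧
      0 < ξ * (Δ - ξ) ∧ ξ * (Δ - ξ) < 1 ∧ 3 * (ξ * (Δ - ξ)) < Δ ^ 2 - 1 := by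
  have hΔ_pos : 0 < Δ := one_pos.trans hΔ
  -- Chosen so that `ξ * Δ = (Δ - 1) / (2 * Δ)` is below both `1 / 2` and `(Δ - 1) / 2`.
  obtain ⟨ξ, hξ⟩ : ∃ ξ : ℝ, ξ = (Δ - 1) / (2 * Δ ^ 2) := ⟨_, rfl⟩
  have hξ_pos : 0 < ξ := hξ ▸ div_pos (sub_pos.mpr hΔ) (mul_pos two_pos (pow_pos hΔ_pos 2))
  have hξΔ : ξ * Δ = (Δ - 1) / (2 * Δ) := by rw [hξ]; field_simp
  have hξΔ_lt_half : ξ * Δ < 1 / 2 := by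
    rw [hξΔ, div_lt_div_iff₀ (by positivity) two_pos]; linarith
  have hξΔ_lt : ξ * Δ < (Δ - 1) / 2 := by
    rw [hξΔ]; exact div_lt_div_of_pos_left (sub_pos.mpr hΔ) two_pos (by linarith)
  have hξ_lt : ξ < ξ * Δ := lt_mul_of_one_lt_right hξ_pos hΔ
  have hprod_lt : ξ * (Δ - ξ) < ξ * Δ := mul_lt_mul_of_pos_left (sub_lt_self Δ hξ_pos) hξ_pos
  have hprod_pos : 0 < ξ * (Δ - ξ) := mul_pos hξ_pos (by linarith)
  have hthree_mul_lt : 3 * (ξ * (Δ - ξ)) < Δ ^ 2 - 1 :=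
    calc 3 * (ξ * (Δ - ξ)) < (Δ - 1) * (3 / 2) := by linarith
      _ < (Δ - 1) * (Δ + 1) := mul_lt_mul_of_pos_left (by linarith) (sub_pos.mpr hΔ)
      _ = Δ ^ 2 - 1 := by ring
  exact ⟨ξ, hξ_pos, by linarith, hprod_pos, by linarith, hthree_mul_lt⟩

theorem zero_mode_collision_neg_beta_general {γ β Δ : ℝ} (hγβ : γ * β < 0) (hΔ : 1 < Δ) :
    ∃ ξ k : ℝ, 0 < ξ ∧ ξ ≤ 1 / 2 ∧ 0 < k ∧ omega γ β k (-Δ + ξ) = omega γ β k ξ := by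
  obtain ⟨ξ, hξ_pos, hξ_le, hpos, hlt_one, hlt⟩ := exists_pos_le_half_mul_sub_lt hΔ
  obtain ⟨k, hk, hcollision⟩ := exists_pos_omega_neg_add_eq_omega hγβ hpos hlt_one hlt
  exact ⟨ξ, k, hξ_pos, hξ_le, hk, hcollision⟩

theorem zero_mode_collision_neg_beta (γ β : ℝ) (hγ : 0 < γ) (hβ : β < 0) :
    ∀ Δn : ℤ, 2 ≤ Δn →
      ∃ ξ k : ℝ, 0 < ξ ∧ ξ ≤ 1/2 ∧ 0 < k ∧
        omega γ β k (-(Δn : ℝ) + ξ) = omega γ β k ξ := fun _ hΔn ↦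
  zero_mode_collision_neg_beta_general (mul_neg_of_pos_of_neg hγ hβ) (by exact_mod_cast hΔn)
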